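/- Let H be a complex separable Hilbert space, let B be a densely defined closed linear operator in H, and let A be a bounded operator on H such that both A and AB are normal. If BA is hyponormal and A*AB ⊂ BA*A, then BA is normal. -/

import Mathlib

noncomputable section

variable {H : Type*} [NormedAddCommGroup H] [InnerProductSpace ℂ H] [CompleteSpace H]

namespace LinearPMap

/-- The composition `S ∘ T` of two partially defined linear operators, with its natural
domain `{x ∈ D(T) : T x ∈ D(S)}`. -/
noncomputable def pcomp (S T : H →ₗ.[ℂ] H) : H →ₗ.[ℂ] H :=
  { domain := (S.domain.comap T.toFun).map T.domain.subtype
    toFun := (S.toFun.comp ((T.toFun.comp (S.domain.comap T.toFun).subtype).codRestrict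
        S.domain fun x => x.2)).comp
      (Submodule.equivMapOfInjective T.domain.subtype Subtype.val_injective
        (S.domain.comap T.toFun)).symm.toLinearMap }

/-- A bounded operator viewed as a partially defined operator with domain the
whole space. -/
noncomputable def ofCLM (A : H →L[ℂ] H) : H →ₗ.[ℂ] H :=
  A.toLinearMap.toPMap ⊤

/-- An unbounded densely defined operator is *normal* if it is closed and
`N N* = N* N` (including equality of the natural domains). -/
def IsNormalPMap (N : H →ₗ.[ℂ] H) : Prop :=
  Dense (N.domain : Set H) ∧ N.IsClosed ∧ N.pcomp N.adjoint = N.adjoint.pcomp N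

end LinearPMap

open LinearPMap ContinuousLinearMap

/-- A bounded operator `T` is *normal* if `T T* = T* T`. -/
def IsNormalOp (T : H →L[ℂ] H) : Prop :=
  T * ContinuousLinearMap.adjoint T = ContinuousLinearMap.adjoint T * T

/-- A densely defined operator `T` is *hyponormal* if `D(T) ⊆ D(T*)` and
`‖T* x‖ ≤ ‖T x‖` for every `x ∈ D(T)`. -/
def IsHyponormalPMap (T : H →ₗ.[ℂ] H) : Prop :=
  ∀ x : T.domain, ∃ hx : (x : H) ∈ T.adjoint.domain, ‖T.adjoint ⟨x, hx⟩‖ ≤ ‖T x‖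

open scoped InnerProductSpace

/-- Graph of a composition. -/
theorem mem_graph_pcomp (S T : H →ₗ.[ℂ] H) (x z : H) :
    (x, z) ∈ (S.pcomp T).graph ↔ ∃ y, (x, y) ∈ T.graph ∧ (y, z) ∈ S.graph := by
  have key : ∀ (x : T.domain) (hx : T x ∈ S.domain) (hx' : (x : H) ∈ (S.pcomp T).domain),
      (S.pcomp T) ⟨x, hx'⟩ = S ⟨T x, hx⟩ := by
    intro x hx hx'
    have h1 : (Submodule.equivMapOfInjective T.domain.subtype Subtype.val_injective
        (S.domain.comap T.toFun)) ⟨x, hx⟩ = ⟨(x : H), hx'⟩ := by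
      apply Subtype.ext
      exact Submodule.coe_equivMapOfInjective_apply _ _ _ _
    have h2 : (Submodule.equivMapOfInjective T.domain.subtype Subtype.val_injective
        (S.domain.comap T.toFun)).symm ⟨(x : H), hx'⟩ = ⟨x, hx⟩ := by
      rw [← h1]; simp
    change S.toFun (((T.toFun.comp (S.domain.comap T.toFun).subtype).codRestrict
        S.domain fun x => x.2) ((Submodule.equivMapOfInjective T.domain.subtype
        Subtype.val_injective (S.domain.comap T.toFun)).symm ⟨(x : H), hx'⟩)) = _
    rw [h2]
    rfl
  constructor
  · intro hxz
    rw [LinearPMap.mem_graph_iff] at hxz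
    obtain ⟨⟨w, hw⟩, h1, h2⟩ := hxz
    have hw' := hw
    obtain ⟨y, hy, rfl⟩ := hw'
    have hy' : T y ∈ S.domain := hy
    simp only at h1 h2
    subst h1
    refine ⟨T y, T.mem_graph y, ?_⟩
    rw [← h2]
    have := key y hy' hw
    simp only [Submodule.subtype_apply] at this ⊢
    rw [this]
    exact S.mem_graph ⟨T y, hy'⟩
  · rintro ⟨y, h1, h2⟩
    rw [LinearPMap.mem_graph_iff] at h1 h2
    obtain ⟨a, ha, rfl⟩ := h1
    obtain ⟨b, hb, rfl⟩ := h2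
    simp only at ha hb
    subst ha
    have hTa : T a ∈ S.domain := hb ▸ b.2
    have hdom : (a : H) ∈ (S.pcomp T).domain := ⟨a, hTa, rfl⟩
    rw [LinearPMap.mem_graph_iff]
    refine ⟨⟨a, hdom⟩, rfl, ?_⟩
    rw [key a hTa hdom]
    congr 1
    exact Subtype.ext hb.symm

theorem mem_graph_ofCLM (A : H →L[ℂ] H) (x y : H) :
    (x, y) ∈ (ofCLM A).graph ↔ A x = y := by
  rw [LinearPMap.mem_graph_iff]
  constructor
  · rintro ⟨a, h1, h2⟩
    simp only at h1 h2
    rw [← h1, ← h2]; rfl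
  · rintro rfl
    exact ⟨⟨x, Submodule.mem_top⟩, rfl, rfl⟩

theorem mem_graph_adj {T : H →ₗ.[ℂ] H} (hT : Dense (T.domain : Set H)) (y w : H) :
    (y, w) ∈ T.adjoint.graph ↔ ∀ a b, (a, b) ∈ T.graph → ⟪b, y⟫_ℂ = ⟪a, w⟫_ℂ := by
  rw [LinearPMap.adjoint_graph_eq_graph_adjoint hT, Submodule.mem_adjoint_iff]
  simp only [sub_eq_zero]

/-- Decomposition of `H × H` along a closed graph, in the only instance needed. -/
theorem exists_resolvent {N : H →ₗ.[ℂ] H} (hd : Dense (N.domain : Set H)) (hc : N.IsClosed)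
    (h : H) : ∃ y x z, (y, x) ∈ N.adjoint.graph ∧ (x, z) ∈ N.graph ∧ y + z = h := by
  let G : Submodule ℂ (WithLp 2 (H × H)) :=
    N.graph.comap (WithLp.linearEquiv 2 ℂ (H × H)).toLinearMap
  have hG : IsClosed (G : Set (WithLp 2 (H × H))) :=
    IsClosed.preimage (WithLp.prod_continuous_ofLp 2 H H) hc
  have : CompleteSpace G := hG.completeSpace_coe
  obtain ⟨g, hg, k, hk, hgk⟩ := G.exists_add_mem_mem_orthogonal (WithLp.toLp 2 (0, h))
  have h1 : g.fst + k.fst = 0 := by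
    have := congrArg (fun p : WithLp 2 (H × H) => p.fst) hgk
    simpa using this.symm
  have h2 : g.snd + k.snd = h := by
    have := congrArg (fun p : WithLp 2 (H × H) => p.snd) hgk
    simpa using this.symm
  refine ⟨k.snd, g.fst, g.snd, ?_, hg, by rw [add_comm]; exact h2⟩
  rw [mem_graph_adj hd]
  intro a b hab
  have := (Submodule.mem_orthogonal _ _).1 hk (WithLp.toLp 2 (a, b)) hab
  rw [WithLp.prod_inner_apply] at this
  simp only at this
  have hg1 : g.fst = - k.fst := eq_neg_of_add_eq_zero_left h1
  rw [hg1, inner_neg_right]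
  exact eq_neg_of_add_eq_zero_right this

/-- For a normal operator, the domain of the adjoint is in the domain. -/
theorem adjoint_domain_le {N : H →ₗ.[ℂ] H} (hN : IsNormalPMap N) {y w : H}
    (hyw : (y, w) ∈ N.adjoint.graph) : ∃ v, (y, v) ∈ N.graph := by
  obtain ⟨hd, hc, hcomm⟩ := hN
  -- the core of the adjoint
  have hstep : ∀ a b c, (a, b) ∈ N.adjoint.graph → (b, c) ∈ N.graph →
      ∃ d, (a, d) ∈ N.graph ∧ ‖d‖ = ‖b‖ := by
    intro a b c h1 h2
    have h3 : (a, c) ∈ (N.pcomp N.adjoint).graph := (mem_graph_pcomp _ _ _ _).2 ⟨b, h1, h2⟩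
    rw [hcomm, mem_graph_pcomp] at h3
    obtain ⟨d, h4, h5⟩ := h3
    refine ⟨d, h4, ?_⟩
    have e1 := (mem_graph_adj hd _ _).1 h5 _ _ h4
    have e2 := (mem_graph_adj hd _ _).1 h1 _ _ h2
    have e3 : ⟪d, d⟫_ℂ = ⟪b, b⟫_ℂ := by
      rw [e1, ← e2, ← inner_conj_symm, e2, inner_conj_symm]
    have e4 : ‖d‖ ^ 2 = ‖b‖ ^ 2 := by
      rw [← inner_self_eq_norm_sq (𝕜 := ℂ), ← inner_self_eq_norm_sq (𝕜 := ℂ), e3]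
    exact (sq_eq_sq₀ (norm_nonneg _) (norm_nonneg _)).1 e4
  let K : Submodule ℂ (WithLp 2 (H × H)) :=
    N.adjoint.graph.comap (WithLp.linearEquiv 2 ℂ (H × H)).toLinearMap
  let C : Submodule ℂ (WithLp 2 (H × H)) := K ⊓
    ((N.domain.comap (LinearMap.snd ℂ H H)).comap
      (WithLp.linearEquiv 2 ℂ (H × H)).toLinearMap)
  have hK : IsClosed (K : Set (WithLp 2 (H × H))) :=
    IsClosed.preimage (WithLp.prod_continuous_ofLp 2 H H) (LinearPMap.adjoint_isClosed hd)
  have hcl : WithLp.toLp 2 (y, w) ∈ C.topologicalClosure := by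
    obtain ⟨g, hg, k, hk, hgk⟩ :=
      C.topologicalClosure.exists_add_mem_mem_orthogonal (WithLp.toLp 2 (y, w))
    have hgK : g ∈ K := C.topologicalClosure_minimal inf_le_left hK hg
    have hkK : k ∈ K := by
      have : k = WithLp.toLp 2 (y, w) - g := by rw [hgk]; abel
      rw [this]
      exact K.sub_mem hyw hgK
    have hk0 : k.fst = 0 := by
      obtain ⟨a, b, c, h1, h2, h3⟩ := exists_resolvent hd hc k.fst
      have hmem : WithLp.toLp 2 (a, b) ∈ C := ⟨h1, LinearPMap.mem_domain_of_mem_graph h2⟩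
      have h4 := (Submodule.mem_orthogonal _ _).1 hk _ (C.le_topologicalClosure hmem)
      rw [WithLp.prod_inner_apply] at h4
      simp only at h4
      have h5 := (mem_graph_adj hd k.fst k.snd).1 hkK _ _ h2
      have h6 : ⟪k.fst, k.fst⟫_ℂ = 0 := by
        nth_rewrite 1 [← h3]
        rw [inner_add_left, h5]
        exact h4
      exact inner_self_eq_zero.1 h6
    have hk1 : k.snd = 0 := LinearPMap.graph_fst_eq_zero_snd N.adjoint (x := k.fst) hkK hk0
    have : k = 0 := by
      have : k = WithLp.toLp 2 (k.fst, k.snd) := rfl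
      rw [this, hk0, hk1]; rfl
    rw [hgk, this, add_zero]; exact hg
  obtain ⟨u, hu, hlim⟩ := mem_closure_iff_seq_limit.1 hcl
  have hu' : ∀ n, ∃ d, ((u n).fst, d) ∈ N.graph := by
    intro n
    obtain ⟨h1, h2⟩ := hu n
    obtain ⟨c, hcc⟩ := LinearPMap.mem_domain_iff.1 h2
    obtain ⟨d, hd1, -⟩ := hstep (u n).fst (u n).snd c h1 hcc
    exact ⟨d, hd1⟩
  choose d hd' using hu'
  have hdist : ∀ n m, ‖d n - d m‖ = ‖(u n).snd - (u m).snd‖ := by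
    intro n m
    obtain ⟨h1, h2⟩ := C.sub_mem (hu n) (hu m)
    obtain ⟨c, hcc⟩ := LinearPMap.mem_domain_iff.1 h2
    obtain ⟨e, he1, he2⟩ := hstep (u n - u m).fst (u n - u m).snd c h1 hcc
    have h3 : ((u n - u m).fst, d n - d m) ∈ N.graph := N.graph.sub_mem (hd' n) (hd' m)
    rw [LinearPMap.mem_graph_snd_inj N h3 he1 rfl, he2]; rfl
  have hl1 : Filter.Tendsto (fun n => (u n).fst) Filter.atTop (nhds y) :=
    ((continuous_fst.comp (WithLp.prod_continuous_ofLp 2 H H)).tendsto _).comp hlim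
  have hl2 : Filter.Tendsto (fun n => (u n).snd) Filter.atTop (nhds w) :=
    ((continuous_snd.comp (WithLp.prod_continuous_ofLp 2 H H)).tendsto _).comp hlim
  have hcau : CauchySeq d := by
    have := hl2.cauchySeq
    rw [Metric.cauchySeq_iff] at this ⊢
    simpa only [dist_eq_norm, hdist] using this
  obtain ⟨v, hv⟩ := cauchySeq_tendsto_of_complete hcau
  refine ⟨v, ?_⟩
  exact hc.mem_of_tendsto (hl1.prodMk_nhds hv) (Filter.Eventually.of_forall hd')

/-- Operators in the closed algebra generated by `Q` leave a closed graph invariant. -/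
theorem graph_invariant {B : H →ₗ.[ℂ] H} (hB : B.IsClosed) {Q P : H →L[ℂ] H}
    (hQ : IsSelfAdjoint Q) (hQB : ∀ x y, (x, y) ∈ B.graph → (Q x, Q y) ∈ B.graph)
    (hP : P ∈ StarAlgebra.elemental ℝ Q) :
    ∀ x y, (x, y) ∈ B.graph → (P x, P y) ∈ B.graph := by
  induction hP using StarAlgebra.elemental.induction_on with
  | self => exact hQB
  | star_self => rw [hQ.star_eq]; exact hQB
  | algebraMap r =>
    intro x y hxy
    have := B.graph.smul_mem (r : ℂ) hxy
    simpa [Algebra.algebraMap_eq_smul_one] using this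
  | add u hu v hv h1 h2 =>
    intro x y hxy
    exact B.graph.add_mem (h1 x y hxy) (h2 x y hxy)
  | mul u hu v hv h1 h2 =>
    intro x y hxy
    exact h1 _ _ (h2 x y hxy)
  | closure s hs h1 v hv =>
    intro x y hxy
    have hcont : Continuous (fun T : H →L[ℂ] H => (T x, T y)) := by fun_prop
    have hcl : IsClosed {T : H →L[ℂ] H | (T x, T y) ∈ B.graph} := IsClosed.preimage hcont hB
    exact closure_minimal (fun u hu => h1 u hu x y hxy) hcl hv

theorem dense_range_add {T P : H →L[ℂ] H}
    (hT : ∀ z, ContinuousLinearMap.adjoint T z = 0 → P z = 0) :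
    DenseRange (T.toLinearMap.coprod (LinearMap.ker P.toLinearMap).subtype) := by
  have : (LinearMap.range (T.toLinearMap.coprod (LinearMap.ker P.toLinearMap).subtype))ᗮ = ⊥ := by
    rw [Submodule.eq_bot_iff]
    intro z hz
    rw [Submodule.mem_orthogonal] at hz
    have h1 : ContinuousLinearMap.adjoint T z = 0 := by
      apply ext_inner_left ℂ
      intro x
      rw [ContinuousLinearMap.adjoint_inner_right, inner_zero_right]
      exact hz _ ⟨(x, 0), by simp⟩
    have h2 : ⟪z, z⟫_ℂ = 0 := hz _ ⟨(0, ⟨z, hT z h1⟩), by simp⟩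
    exact inner_self_eq_zero.1 h2
  rw [← Submodule.topologicalClosure_eq_top_iff] at this
  have h3 := Submodule.dense_iff_topologicalClosure_eq_top.2 this
  rwa [LinearMap.coe_range] at h3

/-- Polar decomposition of a bounded normal operator with a unitary factor. -/
theorem exists_polar (A : H →L[ℂ] H) (hA : IsNormalOp A) :
    ∃ (P : H →L[ℂ] H) (U : H ≃ₗᵢ[ℂ] H),
      P ∈ StarAlgebra.elemental ℝ (ContinuousLinearMap.adjoint A * A) ∧
      (∀ x, U (P x) = A x) ∧ ∀ x, P (U x) = A x := by
  set Q : H →L[ℂ] H := ContinuousLinearMap.adjoint A * A with hQdef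
  have hQ0 : 0 ≤ Q := star_mul_self_nonneg A
  have hQ : IsSelfAdjoint Q := IsSelfAdjoint.star_mul_self A
  let P : H →L[ℂ] H := cfc Real.sqrt Q
  have hPsa : IsSelfAdjoint P := cfc_predicate Real.sqrt Q
  have hPP : P * P = Q := by
    change cfc Real.sqrt Q * cfc Real.sqrt Q = Q
    rw [← cfc_mul Real.sqrt Real.sqrt Q]
    conv_rhs => rw [← cfc_id' ℝ Q]
    apply cfc_congr
    intro t ht
    exact Real.mul_self_sqrt (spectrum_nonneg_of_nonneg hQ0 ht)
  have hcomm : Commute Q A := by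
    change ContinuousLinearMap.adjoint A * A * A = A * (ContinuousLinearMap.adjoint A * A)
    rw [← mul_assoc A, hA]
  have hPA : Commute P A := hcomm.cfc_real Real.sqrt
  have hPadj : ContinuousLinearMap.adjoint P = P := hPsa
  have hPin : ∀ x y, ⟪P x, y⟫_ℂ = ⟪x, P y⟫_ℂ := by
    intro x y
    rw [← ContinuousLinearMap.adjoint_inner_right, hPadj]
  have hnorm : ∀ x, ‖P x‖ = ‖A x‖ := by
    intro x
    have : ⟪P x, P x⟫_ℂ = ⟪A x, A x⟫_ℂ := by
      rw [hPin, ← ContinuousLinearMap.adjoint_inner_right A]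
      change ⟪x, (P * P) x⟫_ℂ = ⟪x, Q x⟫_ℂ
      rw [hPP]
    have e4 : ‖P x‖ ^ 2 = ‖A x‖ ^ 2 := by
      rw [← inner_self_eq_norm_sq (𝕜 := ℂ), ← inner_self_eq_norm_sq (𝕜 := ℂ), this]
    exact (sq_eq_sq₀ (norm_nonneg _) (norm_nonneg _)).1 e4
  have hnorm' : ∀ x, ‖ContinuousLinearMap.adjoint A x‖ = ‖A x‖ := by
    intro x
    have : ⟪ContinuousLinearMap.adjoint A x, ContinuousLinearMap.adjoint A x⟫_ℂ
        = ⟪A x, A x⟫_ℂ := by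
      rw [ContinuousLinearMap.adjoint_inner_left, ← ContinuousLinearMap.adjoint_inner_right A]
      change ⟪x, (A * ContinuousLinearMap.adjoint A) x⟫_ℂ = _
      rw [hA]; rfl
    have e4 : ‖ContinuousLinearMap.adjoint A x‖ ^ 2 = ‖A x‖ ^ 2 := by
      rw [← inner_self_eq_norm_sq (𝕜 := ℂ), ← inner_self_eq_norm_sq (𝕜 := ℂ), this]
    exact (sq_eq_sq₀ (norm_nonneg _) (norm_nonneg _)).1 e4
  have d1 : DenseRange (P.toLinearMap.coprod (LinearMap.ker P.toLinearMap).subtype) :=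
    dense_range_add (fun z hz => by rwa [hPadj] at hz)
  have d2 : DenseRange (A.toLinearMap.coprod (LinearMap.ker P.toLinearMap).subtype) :=
    dense_range_add (fun z hz => by
      rw [← norm_eq_zero, hnorm, ← hnorm', hz, norm_zero])
  have hiso : ∀ x : H × LinearMap.ker P.toLinearMap,
      ‖A.toLinearMap.coprod (LinearMap.ker P.toLinearMap).subtype
        (LinearEquiv.refl ℂ (H × LinearMap.ker P.toLinearMap) x)‖
      = ‖P.toLinearMap.coprod (LinearMap.ker P.toLinearMap).subtype x‖ := by
    rintro ⟨x, k, hk⟩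
    have hk' : P k = 0 := hk
    have hk2 : ContinuousLinearMap.adjoint A k = 0 := by
      rw [← norm_eq_zero, hnorm', ← hnorm, hk', norm_zero]
    have o1 : ⟪P x, k⟫_ℂ = 0 := by rw [hPin, hk', inner_zero_right]
    have o2 : ⟪A x, k⟫_ℂ = 0 := by
      rw [← ContinuousLinearMap.adjoint_inner_right, hk2, inner_zero_right]
    have p1 := norm_add_sq_eq_norm_sq_add_norm_sq_of_inner_eq_zero (P x) k o1
    have p2 := norm_add_sq_eq_norm_sq_add_norm_sq_of_inner_eq_zero (A x) k o2
    change ‖A x + k‖ = ‖P x + k‖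
    rw [hnorm, ← p2] at p1
    exact ((mul_self_inj (norm_nonneg _) (norm_nonneg _)).1 p1).symm
  let U : H ≃ₗᵢ[ℂ] H := (LinearEquiv.refl ℂ (H × LinearMap.ker P.toLinearMap)).extendOfIsometry
    (P.toLinearMap.coprod (LinearMap.ker P.toLinearMap).subtype)
    (A.toLinearMap.coprod (LinearMap.ker P.toLinearMap).subtype) d1 d2 hiso
  have hU : ∀ (x : H) (k : LinearMap.ker P.toLinearMap), U (P x + k) = A x + k := by
    intro x k
    exact LinearEquiv.extendOfIsometry_eq _ _ _ d1 d2 hiso (x, k)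
  have hU0 : ∀ x, U (P x) = A x := by
    intro x
    simpa using hU x 0
  refine ⟨P, U, cfc_mem_elemental _ _, hU0, ?_⟩
  refine d1.induction ?_ (isClosed_eq (P.continuous.comp U.continuous) A.continuous)
  rintro _ ⟨⟨x, k, hk⟩, rfl⟩
  have hk' : P k = 0 := hk
  have hk2 : A k = 0 := by rw [← norm_eq_zero, ← hnorm, hk', norm_zero]
  change P (U (P x + (⟨k, hk⟩ : LinearMap.ker P.toLinearMap))) = A (P x + k)
  rw [hU, _root_.map_add, _root_.map_add]
  simp only [hk', hk2, add_zero]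
  exact congrArg (fun T : H →L[ℂ] H => T x) hPA.eq

/-- If `B` is densely defined and closed, `A` is bounded, `A` and `AB` are normal,
`BA` is hyponormal and `A* A B ⊂ B A* A`, then `BA` is normal. -/
theorem kaplansky_unbounded_backward [TopologicalSpace.SeparableSpace H] (B : H →ₗ.[ℂ] H) (A : H →L[ℂ] H)
    (hBdense : Dense (B.domain : Set H)) (hBclosed : B.IsClosed)
    (hA : IsNormalOp A) (hAB : IsNormalPMap ((ofCLM A).pcomp B))
    (hBA : IsHyponormalPMap (B.pcomp (ofCLM A)))
    (h : (ofCLM (ContinuousLinearMap.adjoint A * A)).pcomp B ≤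
      B.pcomp (ofCLM (ContinuousLinearMap.adjoint A * A))) :
    IsNormalPMap (B.pcomp (ofCLM A)) := by
  obtain ⟨P, U, hP, hUP, hPU⟩ := exists_polar A hA
  have hQB : ∀ x y, (x, y) ∈ B.graph → ((ContinuousLinearMap.adjoint A * A) x,
      (ContinuousLinearMap.adjoint A * A) y) ∈ B.graph := by
    intro x y hxy
    have h1 := LinearPMap.le_graph_of_le h ((mem_graph_pcomp _ _ _ _).2
      ⟨y, hxy, (mem_graph_ofCLM _ _ _).2 rfl⟩)
    obtain ⟨z, h2, h3⟩ := (mem_graph_pcomp _ _ _ _).1 h1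
    rw [mem_graph_ofCLM] at h2
    rw [h2]; exact h3
  have hPB := graph_invariant hBclosed (IsSelfAdjoint.star_mul_self A) hQB hP
  set N := (ofCLM A).pcomp B with hN
  set T := B.pcomp (ofCLM A) with hT
  have hTg : ∀ x z, (x, z) ∈ T.graph ↔ (A x, z) ∈ B.graph := by
    intro x z
    rw [hT, mem_graph_pcomp]
    simp only [mem_graph_ofCLM, exists_eq_left']
  have hNg : ∀ x z, (x, z) ∈ N.graph ↔ ∃ y, (x, y) ∈ B.graph ∧ A y = z := by
    intro x z
    rw [hN, mem_graph_pcomp]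
    simp only [mem_graph_ofCLM]
  have hsup : ∀ x z, (U x, U z) ∈ N.graph → (x, z) ∈ T.graph := by
    intro x z hxz
    obtain ⟨y, h1, h2⟩ := (hNg _ _).1 hxz
    rw [hTg, ← hPU]
    have : z = P y := U.injective (by rw [hUP, h2])
    rw [this]
    exact hPB _ _ h1
  have hNd := hAB.1
  have hTd : Dense (T.domain : Set H) := by
    have h1 : Dense (U.symm '' (N.domain : Set H)) :=
      U.symm.surjective.denseRange.dense_image U.symm.continuous hNd
    refine h1.mono ?_
    rintro _ ⟨x, hx, rfl⟩
    obtain ⟨v, hv⟩ := LinearPMap.mem_domain_iff.1 hx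
    exact LinearPMap.mem_domain_of_mem_graph (hsup (U.symm x) (U.symm v) (by simpa using hv))
  have hadj1 : ∀ x w, (x, w) ∈ T.adjoint.graph → (U x, U w) ∈ N.adjoint.graph := by
    intro x w hxw
    rw [mem_graph_adj hNd]
    intro a b hab
    have := (mem_graph_adj hTd _ _).1 hxw _ _
      (hsup (U.symm a) (U.symm b) (by simpa using hab))
    rw [← U.inner_map_map, ← U.inner_map_map (U.symm a)] at this
    simpa using this
  have hTN : ∀ x z, (x, z) ∈ T.graph ↔ (U x, U z) ∈ N.graph := by
    intro x z
    refine ⟨fun hxz => ?_, hsup x z⟩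
    obtain ⟨hx, -⟩ := hBA ⟨x, LinearPMap.mem_domain_of_mem_graph hxz⟩
    obtain ⟨w, hw⟩ := LinearPMap.mem_domain_iff.1 hx
    obtain ⟨v, hv⟩ := adjoint_domain_le hAB (hadj1 x w hw)
    have h1 : (x, U.symm v) ∈ T.graph := hsup _ _ (by simpa using hv)
    have h2 : z = U.symm v := LinearPMap.mem_graph_snd_inj T hxz h1 rfl
    rw [h2]; simpa using hv
  have hTN' : ∀ x w, (x, w) ∈ T.adjoint.graph ↔ (U x, U w) ∈ N.adjoint.graph := by
    intro x w
    refine ⟨hadj1 x w, fun hxw => ?_⟩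
    rw [mem_graph_adj hTd]
    intro a b hab
    have := (mem_graph_adj hNd _ _).1 hxw _ _ ((hTN a b).1 hab)
    simpa using this
  refine ⟨hTd, ?_, ?_⟩
  · have hcont : Continuous (fun p : H × H => (A p.1, p.2)) := by fun_prop
    have : (T.graph : Set (H × H)) = (fun p : H × H => (A p.1, p.2)) ⁻¹' (B.graph : Set (H × H)) := by
      ext ⟨x, z⟩
      exact hTg x z
    change IsClosed (T.graph : Set (H × H))
    rw [this]
    exact IsClosed.preimage hcont hBclosed
  · apply LinearPMap.eq_of_eq_graph
    ext ⟨x, z⟩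
    have e1 : (x, z) ∈ (T.pcomp T.adjoint).graph ↔ (U x, U z) ∈ (N.pcomp N.adjoint).graph := by
      rw [mem_graph_pcomp, mem_graph_pcomp]
      simp only [hTN, hTN']
      exact (U.surjective.exists (p := fun y => (U x, y) ∈ N.adjoint.graph ∧ (y, U z) ∈ N.graph)).symm
    have e2 : (x, z) ∈ (T.adjoint.pcomp T).graph ↔ (U x, U z) ∈ (N.adjoint.pcomp N).graph := by
      rw [mem_graph_pcomp, mem_graph_pcomp]
      simp only [hTN, hTN']
      exact (U.surjective.exists (p := fun y => (U x, y) ∈ N.graph ∧ (y, U z) ∈ N.adjoint.graph)).symm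
    rw [e1, e2, hAB.2.2]
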